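/- Let k be a field of odd prime characteristic p and n ≥ 1. Then there is an isomorphism of kS_n-modules sgn(n) ⊕ ⨁_{μ ∈ P(n;p), ε_μ = −1} M(μ|(n−|μ|))^{⊕ c_μ^(p)} ≅ ⨁_{μ ∈ P(n;p), ε_μ = 1} M(μ|(n−|μ|))^{⊕ c_μ^(p)}, where sgn(n) = M(∅|(n)) is the sign representation of S_n and (n−|μ|) denotes the one-part composition with the single part n−|μ| (the empty composition if |μ| = n). -/

import Mathlib

noncomputable section
open scoped DirectSum

/-- The index of the block (among consecutive blocks of sizes `γ_1, γ_2, …`) containing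
position `x`; blocks are numbered starting from `0`. -/
def blockIdx (γ : List ℕ) (x : ℕ) : ℕ :=
  (List.range γ.length).countP fun j => decide ((γ.take (j + 1)).sum ≤ x)

/-- The Young subgroup of `S_n` attached to the finite sequence `γ`: permutations mapping
each of the consecutive blocks of sizes `γ_1, γ_2, …` to itself. -/
def youngSubgroup (n : ℕ) (γ : List ℕ) : Subgroup (Equiv.Perm (Fin n)) where
  carrier := {σ | ∀ x : Fin n, blockIdx γ (σ x) = blockIdx γ x}
  one_mem' := fun _ => rfl
  mul_mem' := by
    intro a b ha hb x
    simpa [Equiv.Perm.mul_apply] using (ha (b x)).trans (hb x)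
  inv_mem' := by
    intro a ha x
    simpa using (ha (a⁻¹ x)).symm

lemma youngSubgroup_mem {n : ℕ} {γ : List ℕ} (σ : youngSubgroup n γ) :
    ∀ x : Fin n, blockIdx γ ((σ : Equiv.Perm (Fin n)) x) = blockIdx γ x := σ.2

/-- Restriction of an element of a Young subgroup to the `j`-th block. -/
def blockRestrict (n : ℕ) (γ : List ℕ) (j : ℕ) :
    youngSubgroup n γ →* Equiv.Perm {x : Fin n // blockIdx γ (x : ℕ) = j} where
  toFun σ := Equiv.Perm.subtypePerm (σ : Equiv.Perm (Fin n)) (fun x => by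
    rw [youngSubgroup_mem σ x])
  map_one' := by
    ext x
    rfl
  map_mul' := by
    intro a b
    ext x
    rfl

/-- The sign of the restriction of an element of a Young subgroup to the `j`-th block,
viewed in the field `k`. -/
def blockSign (k : Type*) [Field k] (n : ℕ) (γ : List ℕ) (j : ℕ) :
    youngSubgroup n γ →* k :=
  ((Int.castRingHom k).toMonoidHom.comp (Units.coeHom ℤ)).comp
    (Equiv.Perm.sign.comp (blockRestrict n γ j))

/-- The character of the Young subgroup `S_α × S_β` affording `k(α) ⊠ sgn(β)`:
`σ` acts by the product of the signs of the restrictions of `σ` to the `β`-blocks. -/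
def chiHom (k : Type*) [Field k] (n : ℕ) (α β : List ℕ) :
    youngSubgroup n (α ++ β) →* k :=
  ∏ j ∈ Finset.Ico α.length (α.length + β.length), blockSign k n (α ++ β) j

/-- The group algebra `k S_n`. -/
abbrev GA (k : Type*) [Field k] (n : ℕ) : Type _ := MonoidAlgebra k (Equiv.Perm (Fin n))

/-- The left submodule of `k S_n` generated by the elements `σ - χ(σ)·1`, `σ ∈ S_α × S_β`,
where `χ` is the character of `k(α) ⊠ sgn(β)`. -/
def relSub (k : Type*) [Field k] (n : ℕ) (α β : List ℕ) : Submodule (GA k n) (GA k n) :=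
  Submodule.span (GA k n)
    {x | ∃ σ : youngSubgroup n (α ++ β),
      x = MonoidAlgebra.single (σ : Equiv.Perm (Fin n)) 1
            - MonoidAlgebra.single 1 (chiHom k n α β σ)}

/-- The signed Young permutation module
`M(α|β) = Ind_{S_α × S_β}^{S_n} (k(α) ⊠ sgn(β)) = k S_n ⊗_{k(S_α×S_β)} (k(α) ⊠ sgn(β))`,
realized as the quotient of `k S_n` by the left submodule generated by
`σ - χ(σ)·1` for `σ ∈ S_α × S_β`. -/
abbrev SYPM (k : Type*) [Field k] (n : ℕ) (α β : List ℕ) : Type _ :=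
  GA k n ⧸ relSub k n α β

/-- A partition: a weakly decreasing finite sequence of positive integers. -/
def IsPartitionL (l : List ℕ) : Prop := l.Pairwise (· ≥ ·) ∧ ∀ x ∈ l, 0 < x

/-- `c_λ^(p)`: the number of compositions of type `λ` all of whose partial sums are
not divisible by `p`. -/
def numCompM (m : ℕ) (l : List ℕ) : ℕ :=
  (l.permutations.dedup.filter fun δ => decide (∀ j < δ.length, ¬ m ∣ (δ.take (j + 1)).sum)).length

/-- `ε_λ = (-1)^(|λ|-ℓ(λ))`. -/
def epsL (l : List ℕ) : ℤ := (-1) ^ (l.sum - l.length)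

/-- `μ ∈ P(n;m)`: `μ` is a partition with `|μ| ≤ n` and `m ∣ n - |μ|`. -/
def MemPnm (n m : ℕ) (μ : List ℕ) : Prop := IsPartitionL μ ∧ μ.sum ≤ n ∧ m ∣ (n - μ.sum)

open Classical in
/-- The multiplicity `c_μ^(p)` when `μ ∈ P(n;p)` and `ε_μ = -1`, else `0`. -/
def multNeg (p n : ℕ) (μ : List ℕ) : ℕ :=
  if MemPnm n p μ ∧ epsL μ = -1 then numCompM p μ else 0

open Classical in
/-- The multiplicity `c_μ^(p)` when `μ ∈ P(n;p)` and `ε_μ = 1`, else `0`. -/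
def multPos (p n : ℕ) (μ : List ℕ) : ℕ :=
  if MemPnm n p μ ∧ epsL μ = 1 then numCompM p μ else 0

/-- The one-part composition `(t)`, interpreted as the empty composition when `t = 0`. -/
def onePart (t : ℕ) : List ℕ := if t = 0 then [] else [t]

/-!
Write `M(α|t)` for `M(α|(t))`. It is realised on words in the positions `{1, …, n}` that use the
letter `a` exactly `α_a` times and leave `t` positions unlabelled, the symmetric group permuting
positions with the sign of the induced permutation of the unlabelled ones. Fix a new letter and let
`D` sum over all ways of toggling one position between unlabelled and the new letter, with the
Koszul sign. This is Clifford multiplication by the sum of the generators: it commutes with the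
symmetric group, and `D ^ 2 = m` on words with `m` positions unlabelled or carrying the new letter.
As `D` changes the parity of the number of new letters, whenever `m ≠ 0` in `k` it gives
`M(α|m) ⊕ ⨁_{i even} M(α,i|m-i) ≅ ⨁_{i odd} M(α,i|m-i)`.

Applying this repeatedly to the new summands until the remainder is divisible by `p` expresses
`M(∅|n)` through compositions none of whose remainders on the way is divisible by `p`; in terms of
the composition read backwards, these are the compositions counted by `c_μ`. All identities are
between isomorphism classes, added by direct sum, and are arranged so that nothing is cancelled.
-/

section IsoClass

universe u w

/-- Two modules are related when they are linearly isomorphic. -/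
def moduleIsoSetoid (R : Type u) [Ring R] : Setoid (ModuleCat.{w} R) where
  r M N := Nonempty (M ≃ₗ[R] N)
  iseqv := ⟨fun _ => ⟨.refl _ _⟩, fun ⟨e⟩ => ⟨e.symm⟩, fun ⟨e⟩ ⟨f⟩ => ⟨e.trans f⟩⟩

/-- The isomorphism classes of `R`-modules, a commutative monoid under direct sum. Multiplicities
of summands become multiples in this monoid, which need not be cancellative. -/
def ModuleIsoClass (R : Type u) [Ring R] : Type _ := Quotient (moduleIsoSetoid.{u, w} R)

namespace ModuleIsoClass

variable (R : Type u) [Ring R]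

/-- The isomorphism class of a module. -/
def mk (M : Type w) [AddCommGroup M] [Module R M] : ModuleIsoClass.{u, w} R :=
  Quotient.mk (moduleIsoSetoid R) (ModuleCat.of R M)

variable {R}

instance : Add (ModuleIsoClass.{u, w} R) where
  add := Quotient.map₂ (fun M N => ModuleCat.of R (M × N))
    fun _ _ ⟨e⟩ _ _ ⟨f⟩ => ⟨LinearEquiv.prodCongr e f⟩

instance : Zero (ModuleIsoClass.{u, w} R) where
  zero := mk R PUnit

instance : AddCommMonoid (ModuleIsoClass.{u, w} R) where
  nsmul := nsmulRec
  add_assoc := by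
    rintro ⟨L⟩ ⟨M⟩ ⟨N⟩
    exact Quotient.sound ⟨LinearEquiv.prodAssoc R L M N⟩
  zero_add := by
    rintro ⟨M⟩
    exact Quotient.sound ⟨LinearEquiv.uniqueProd⟩
  add_zero := by
    rintro ⟨M⟩
    exact Quotient.sound ⟨LinearEquiv.prodUnique⟩
  add_comm := by
    rintro ⟨M⟩ ⟨N⟩
    exact Quotient.sound ⟨LinearEquiv.prodComm R M N⟩

variable {M N : Type w} [AddCommGroup M] [Module R M] [AddCommGroup N] [Module R N]

lemma mk_eq_mk_iff : mk R M = mk R N ↔ Nonempty (M ≃ₗ[R] N) :=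
  ⟨fun h => Quotient.exact h, fun h => Quotient.sound h⟩

lemma mk_congr (e : M ≃ₗ[R] N) : mk R M = mk R N :=
  mk_eq_mk_iff.2 ⟨e⟩

lemma mk_prod : mk R (M × N) = mk R M + mk R N := rfl

lemma mk_of_subsingleton [Subsingleton M] : mk R M = 0 :=
  mk_congr (0 : M ≃ₗ[R] PUnit.{w + 1})

lemma mk_directSum {ι : Type} [Fintype ι] (M : ι → Type w) [∀ i, AddCommGroup (M i)]
    [∀ i, Module R (M i)] : mk R (⨁ i, M i) = ∑ i, mk R (M i) := by
  classical
  revert M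
  refine Fintype.induction_empty_option (P := fun ι _ => ∀ (M : ι → Type w)
    [∀ i, AddCommGroup (M i)] [∀ i, Module R (M i)], mk R (⨁ i, M i) = ∑ i, mk R (M i))
    (fun α β _ e ih M _ _ => ?_) (fun M _ _ => ?_) (fun α _ ih M _ _ => ?_) ι
  · let := Fintype.ofEquiv β e.symm
    rw [← Equiv.sum_comp e, ← ih fun a => M (e a)]
    exact mk_congr (DirectSum.lequivCongrLeft R e.symm)
  · rw [Finset.univ_eq_empty, Finset.sum_empty]
    exact mk_of_subsingleton
  · rw [Fintype.sum_option, ← ih, ← mk_prod]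
    exact mk_congr (DirectSum.lequivProdDirectSum R)

lemma mk_iSup_of_iSupIndep {ι : Type} [Fintype ι] {P : ι → Submodule R M} (h : iSupIndep P) :
    mk R ↥(⨆ i, P i) = ∑ i, mk R (P i) := by
  classical
  rw [← mk_directSum, Submodule.iSup_eq_range_dfinsupp_lsum]
  exact mk_congr (LinearEquiv.ofInjective _ h.dfinsupp_lsum_injective).symm

end ModuleIsoClass

end IsoClass

/-- A `1`-cocycle on the group `G` with values in the sign-valued functions on the `G`-set `X`. -/
structure SignCocycle (G X : Type*) [Group G] [MulAction G X] where
  toFun : G → X → ℤˣ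
  map_mul' : ∀ g h x, toFun (g * h) x = toFun g (h • x) * toFun h x

namespace SignCocycle

open MonoidAlgebra

variable {k G X : Type*} [CommRing k] [Group G] [MulAction G X]

instance : CoeFun (SignCocycle G X) fun _ => G → X → ℤˣ := ⟨toFun⟩

section Module

variable (c : SignCocycle G X)

lemma map_mul (g h : G) (x : X) : c (g * h) x = c g (h • x) * c h x := c.map_mul' g h x

lemma map_one (x : X) : c 1 x = 1 := by
  simpa only [mul_one, one_smul, left_eq_mul] using c.map_mul 1 1 x

variable (k)

/-- The permutation representation on `X →₀ k` twisted by `c`: `g` sends the basis vector `x` to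
`c g x` times the basis vector `g • x`. -/
def rep : Representation k G (X →₀ k) where
  toFun g := Finsupp.linearCombination k fun x => c g x • Finsupp.single (g • x) 1
  map_one' := by
    ext x : 2
    simp [c.map_one]
  map_mul' g h := by
    ext x : 2
    simp [c.map_mul, mul_smul, mul_comm (c g _)]

lemma rep_single (g : G) (x : X) (a : k) :
    c.rep k g (Finsupp.single x a) = c g x • Finsupp.single (g • x) a := by
  simp [rep]

/-- The underlying space `X →₀ k` of the representation `c.rep k`, as a `k[G]`-module. -/
def TwistedModule (_ : SignCocycle G X) : Type _ := X →₀ k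

instance : AddCommGroup (c.TwistedModule k) := inferInstanceAs (AddCommGroup (X →₀ k))

instance : Module k (c.TwistedModule k) := inferInstanceAs (Module k (X →₀ k))

instance : Module k[G] (c.TwistedModule k) :=
  inferInstanceAs (Module k[G] (c.rep k).asModule)

/-- The identity map from the twisted permutation module to finitely supported functions. -/
def toFinsupp : c.TwistedModule k ≃ₗ[k] (X →₀ k) := LinearEquiv.refl k _

lemma toFinsupp_single_smul (g : G) (a : k) (v : c.TwistedModule k) :
    c.toFinsupp k (single g a • v) = a • c.rep k g (c.toFinsupp k v) :=
  (c.rep k).single_smul a g v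

/-- The basis vector of the twisted permutation module indexed by `x`. -/
def basisVec (x : X) : c.TwistedModule k := (c.toFinsupp k).symm (Finsupp.single x 1)

lemma toFinsupp_basisVec (x : X) : c.toFinsupp k (c.basisVec k x) = Finsupp.single x 1 := rfl

lemma single_smul_basisVec (g : G) (a : k) (x : X) :
    single g a • c.basisVec k x = a • c g x • c.basisVec k (g • x) := by
  apply (c.toFinsupp k).injective
  rw [toFinsupp_single_smul, toFinsupp_basisVec, rep_single]
  rfl

/-- The `k[G]`-submodule generated by the basis vectors indexed by `S`. -/
def span (S : Set X) : Submodule k[G] (c.TwistedModule k) :=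
  Submodule.span k[G] (c.basisVec k '' S)

lemma basisVec_mem_span {S : Set X} {x : X} (hx : x ∈ S) : c.basisVec k x ∈ c.span k S :=
  Submodule.subset_span ⟨x, hx, rfl⟩

lemma basisVec_smul_mem_span {S : Set X} {x : X} (hx : x ∈ S) (g : G) :
    c.basisVec k (g • x) ∈ c.span k S := by
  have h := (c.span k S).smul_mem (single g 1) (c.basisVec_mem_span k hx)
  rw [single_smul_basisVec, one_smul, Units.smul_def] at h
  rcases Int.units_eq_one_or (c g x) with hc | hc <;> simpa [hc] using h

lemma span_le_iff {S : Set X} {P : Submodule k[G] (c.TwistedModule k)} :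
    c.span k S ≤ P ↔ ∀ x ∈ S, c.basisVec k x ∈ P := by
  rw [span, Submodule.span_le, Set.image_subset_iff]
  rfl

lemma span_eq_span_singleton {S : Set X} {x : X} (hx : x ∈ S)
    (hS : S ⊆ MulAction.orbit G x) : c.span k S = c.span k {x} := by
  refine le_antisymm ((c.span_le_iff k).2 fun y hy => ?_) ((c.span_le_iff k).2 ?_)
  · obtain ⟨g, rfl⟩ := hS hy
    exact c.basisVec_smul_mem_span k (Set.mem_singleton x) g
  · rintro _ rfl
    exact c.basisVec_mem_span k hx

lemma span_iUnion {ι : Sort*} (S : ι → Set X) : c.span k (⋃ i, S i) = ⨆ i, c.span k (S i) := by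
  simp only [span, Set.image_iUnion, Submodule.span_iUnion]

lemma rep_mem_supported {S : Set X} (hS : ∀ g : G, ∀ x ∈ S, g • x ∈ S) (g : G) {f : X →₀ k}
    (hf : f ∈ Finsupp.supported k k S) : c.rep k g f ∈ Finsupp.supported k k S := by
  suffices Finsupp.supported k k S ≤ (Finsupp.supported k k S).comap (c.rep k g) from this hf
  conv_lhs => rw [Finsupp.supported_eq_span_single]
  rw [Submodule.span_le]
  rintro _ ⟨x, hx, rfl⟩
  rw [SetLike.mem_coe, Submodule.mem_comap, rep_single, Units.smul_def]
  exact zsmul_mem (Finsupp.single_mem_supported k 1 (hS g x hx)) _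

lemma toFinsupp_mem_supported {S : Set X} (hS : ∀ g : G, ∀ x ∈ S, g • x ∈ S)
    {v : c.TwistedModule k} (hv : v ∈ c.span k S) :
    c.toFinsupp k v ∈ Finsupp.supported k k S := by
  induction hv using Submodule.span_induction with
  | mem v hv =>
    obtain ⟨x, hx, rfl⟩ := hv
    exact Finsupp.single_mem_supported k 1 hx
  | zero => exact zero_mem _
  | add v w _ _ hv hw => exact add_mem hv hw
  | smul a v _ hv =>
    induction a using MonoidAlgebra.induction_linear with
    | zero => simp only [zero_smul, map_zero, zero_mem]
    | add a b ha hb => rw [add_smul, map_add]; exact add_mem ha hb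
    | single g a =>
      rw [toFinsupp_single_smul]
      exact Submodule.smul_mem _ a (c.rep_mem_supported k hS g hv)

lemma disjoint_span {S T : Set X} (hS : ∀ g : G, ∀ x ∈ S, g • x ∈ S)
    (hT : ∀ g : G, ∀ x ∈ T, g • x ∈ T) (hST : Disjoint S T) :
    Disjoint (c.span k S) (c.span k T) := by
  rw [Submodule.disjoint_def]
  intro v hvS hvT
  apply (c.toFinsupp k).injective
  exact Submodule.disjoint_def.1 (Finsupp.disjoint_supported_supported (M := k) (R := k) hST) _
    (c.toFinsupp_mem_supported k hS hvS) (c.toFinsupp_mem_supported k hT hvT)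

lemma mk_span_iUnion {ι : Type} [Fintype ι] {S : ι → Set X}
    (hS : ∀ i, ∀ g : G, ∀ x ∈ S i, g • x ∈ S i) (hd : Pairwise (Function.onFun Disjoint S)) :
    ModuleIsoClass.mk k[G] ↥(c.span k (⋃ i, S i)) =
      ∑ i, ModuleIsoClass.mk k[G] ↥(c.span k (S i)) := by
  rw [span_iUnion]
  refine ModuleIsoClass.mk_iSup_of_iSupIndep fun i => ?_
  simp only [← span_iUnion]
  refine c.disjoint_span k (hS i) (fun g x hx => ?_) ?_
  · simp only [Set.mem_iUnion] at hx ⊢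
    obtain ⟨j, hj, hx⟩ := hx
    exact ⟨j, hj, hS j g x hx⟩
  · simp only [Set.disjoint_iUnion_right]
    exact fun j hj => hd hj.symm

end Module

section Lift

variable (c : SignCocycle G X)

lemma single_smul_eq_smul_single_one_smul (g : G) (a : k) (v : c.TwistedModule k) :
    single g a • v = a • single g (1 : k) • v := by
  apply (c.toFinsupp k).injective
  rw [toFinsupp_single_smul, map_smul, toFinsupp_single_smul, one_smul]

variable {c} {F : X → c.TwistedModule k}

lemma linearCombination_rep (hF : ∀ g x, single g (1 : k) • F x = c g x • F (g • x)) (g : G)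
    (f : X →₀ k) : Finsupp.linearCombination k F (c.rep k g f) =
      single g (1 : k) • Finsupp.linearCombination k F f := by
  induction f using Finsupp.induction_linear with
  | zero => simp only [map_zero, smul_zero]
  | add f f' hf hf' => simp only [map_add, smul_add, hf, hf']
  | single x a =>
    have h_comm : single g (1 : k) • a • F x = a • single g (1 : k) • F x := by
      apply (c.toFinsupp k).injective
      simp only [map_smul, toFinsupp_single_smul, one_smul]
    rw [rep_single, LinearMap.map_smul_of_tower, Finsupp.linearCombination_single,
      Finsupp.linearCombination_single, h_comm, hF, smul_comm]

/-- The endomorphism of the twisted permutation module with prescribed values on basis vectors. -/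
def lift (F : X → c.TwistedModule k)
    (hF : ∀ g x, single g (1 : k) • F x = c g x • F (g • x)) :
    c.TwistedModule k →ₗ[k[G]] c.TwistedModule k where
  toFun v := Finsupp.linearCombination k F (c.toFinsupp k v)
  map_add' v w := by simp only [map_add]
  map_smul' a v := by
    induction a using MonoidAlgebra.induction_linear with
    | zero => simp only [zero_smul, map_zero]
    | add a b ha hb => simp_all only [add_smul, map_add, RingHom.id_apply]
    | single g a =>
      rw [toFinsupp_single_smul, map_smul, linearCombination_rep hF, RingHom.id_apply,
        ← single_smul_eq_smul_single_one_smul]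

lemma lift_basisVec (hF : ∀ g x, single g (1 : k) • F x = c g x • F (g • x)) (x : X) :
    lift F hF (c.basisVec k x) = F x :=
  (Finsupp.linearCombination_single k 1 x).trans (one_smul k _)

end Lift

section Induced

/-- The left submodule of `k[G]` generated by the `h - χ h` for `h ∈ H`. The quotient by it is the
representation induced from the one-dimensional representation `χ` of `H`. -/
def inducedRelations (H : Subgroup G) (χ : H → k) : Submodule k[G] k[G] :=
  Submodule.span k[G] {a | ∃ h : H, a = single (h : G) 1 - single 1 (χ h)}

lemma mkQ_inducedRelations_single_mul {H : Subgroup G} {χ : H → k} (g : G) (h : H) :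
    (inducedRelations H χ).mkQ (single (g * h) 1) =
      χ h • (inducedRelations H χ).mkQ (single g 1) := by
  have h_mem : single g (1 : k) • (single (h : G) 1 - single 1 (χ h)) ∈ inducedRelations H χ :=
    Submodule.smul_mem _ _ (Submodule.subset_span ⟨h, rfl⟩)
  rw [smul_sub, smul_eq_mul, smul_eq_mul, single_mul_single, single_mul_single, mul_one, mul_one,
    one_mul] at h_mem
  rw [← LinearMap.map_smul_of_tower, MonoidAlgebra.smul_single, smul_eq_mul, mul_one]
  exact (Submodule.Quotient.eq _).2 h_mem

variable {c : SignCocycle G X} {x : X} {H : Subgroup G} {χ : H → k}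

lemma sign_smul_mkQ_single_eq (hH : H = MulAction.stabilizer G x)
    (hχ : ∀ h : H, χ h = ((c h x : ℤ) : k)) {g g' : G} (hg : g • x = g' • x) :
    c g x • (inducedRelations H χ).mkQ (single g 1) =
      c g' x • (inducedRelations H χ).mkQ (single g' 1) := by
  have h_mem : g⁻¹ * g' ∈ H := by
    rw [hH, MulAction.mem_stabilizer_iff, mul_smul, ← hg, inv_smul_smul]
  obtain ⟨h, rfl⟩ : ∃ h : H, g' = g * h := ⟨⟨_, h_mem⟩, (mul_inv_cancel_left g g').symm⟩
  have h_fix : (h : G) • x = x := MulAction.mem_stabilizer_iff.1 (hH ▸ h.2)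
  rw [c.map_mul, h_fix, mkQ_inducedRelations_single_mul, hχ, Int.cast_smul_eq_zsmul,
    ← Units.smul_def, smul_smul, mul_assoc, Int.units_mul_self, mul_one]

lemma ker_toSpanSingleton_basisVec (hH : H = MulAction.stabilizer G x)
    (hχ : ∀ h : H, χ h = ((c h x : ℤ) : k)) :
    LinearMap.ker (LinearMap.toSpanSingleton k[G] _ (c.basisVec k x)) = inducedRelations H χ := by
  refine le_antisymm (fun a ha => ?_) (Submodule.span_le.2 ?_)
  · let signedCoset (g : G) : k[G] ⧸ inducedRelations H χ :=
      c g x • (inducedRelations H χ).mkQ (single g 1)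
    let section_ : (X →₀ k) →ₗ[k] k[G] ⧸ inducedRelations H χ :=
      Finsupp.linearCombination k (Function.extend (· • x) signedCoset 0)
    have h_section (b : k[G]) :
        section_ (c.toFinsupp k (b • c.basisVec k x)) = (inducedRelations H χ).mkQ b := by
      have h_extend (g : G) : Function.extend (· • x) signedCoset 0 (g • x) = signedCoset g :=
        Function.FactorsThrough.extend_apply (fun _ _ => sign_smul_mkQ_single_eq hH hχ) 0 g
      induction b using MonoidAlgebra.induction_linear with
      | zero => simp only [zero_smul, map_zero]
      | add a b ha hb => simp only [add_smul, map_add, ha, hb]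
      | single g a =>
        rw [toFinsupp_single_smul, toFinsupp_basisVec, rep_single, map_smul,
          LinearMap.map_smul_of_tower, Finsupp.linearCombination_single, one_smul, h_extend,
          smul_smul, Int.units_mul_self, one_smul, ← LinearMap.map_smul_of_tower,
          MonoidAlgebra.smul_single, smul_eq_mul, mul_one]
    rw [LinearMap.mem_ker, LinearMap.toSpanSingleton_apply] at ha
    rw [← Submodule.Quotient.mk_eq_zero, ← Submodule.mkQ_apply, ← h_section, ha, map_zero, map_zero]
  · rintro _ ⟨h, rfl⟩
    have h_fix : (h : G) • x = x := MulAction.mem_stabilizer_iff.1 (hH ▸ h.2)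
    simp [sub_smul, single_smul_basisVec, h_fix, hχ, c.map_one, Units.smul_def,
      Int.cast_smul_eq_zsmul]

theorem nonempty_quotient_inducedRelations_equiv_span (hH : H = MulAction.stabilizer G x)
    (hχ : ∀ h : H, χ h = ((c h x : ℤ) : k)) :
    Nonempty ((k[G] ⧸ inducedRelations H χ) ≃ₗ[k[G]] c.span k {x}) := by
  rw [span, Set.image_singleton, ← LinearMap.range_toSpanSingleton,
    ← ker_toSpanSingleton_basisVec hH hχ]
  exact ⟨LinearMap.quotKerEquivRange _⟩

end Induced

end SignCocycle

section InversionSign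

open Equiv

lemma symmDiff_singleton_cases {ι : Type*} [DecidableEq ι] (O : Finset ι) (j : ι) :
    ∃ U : Finset ι, j ∉ U ∧
      (O = U ∧ symmDiff O {j} = insert j U ∨ O = insert j U ∧ symmDiff O {j} = U) := by
  refine ⟨O.erase j, O.notMem_erase j, ?_⟩
  by_cases hj : j ∈ O
  · refine .inr ⟨(Finset.insert_erase hj).symm, ?_⟩
    ext x
    by_cases hx : x = j <;> simp [Finset.mem_symmDiff, hx, hj]
  · refine .inl ⟨(Finset.erase_eq_of_notMem hj).symm, ?_⟩
    ext x
    by_cases hx : x = j <;> simp [Finset.mem_symmDiff, hx, hj]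

lemma even_card_symmDiff_singleton {ι : Type*} [DecidableEq ι] (O : Finset ι) (j : ι) :
    Even (symmDiff O {j}).card ↔ ¬Even O.card := by
  obtain ⟨U, hj, ⟨hO, hO'⟩ | ⟨hO, hO'⟩⟩ := symmDiff_singleton_cases O j <;>
    rw [hO', hO, Finset.card_insert_of_notMem hj, Nat.even_add_one]
  exact not_not.symm

variable {ι : Type*} [LinearOrder ι]

/-- The sign of the ordered pair `(i, j)`, negative when `i` is to the left of `j`. -/
def pairSign (i j : ι) : ℤˣ := if i < j then -1 else 1

/-- The sign picked up by an odd symbol moving from the far left to position `j`, past the odd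
symbols at the positions in `O`. -/
def crossingSign (O : Finset ι) (j : ι) : ℤˣ := ∏ i ∈ O, pairSign i j

/-- The sign with which `σ` permutes odd symbols standing at the positions in `O`: the parity of
the number of inversions of `σ` within `O`. -/
def inversionSign (σ : Perm ι) (O : Finset ι) : ℤˣ :=
  ∏ i ∈ O, ∏ j ∈ O, if i < j ∧ σ j < σ i then -1 else 1

lemma pairSign_self (i : ι) : pairSign i i = 1 := if_neg (lt_irrefl i)

lemma pairSign_anticomm {i j : ι} (h : i ≠ j) : pairSign i j = -pairSign j i := by
  unfold pairSign
  rcases lt_or_gt_of_ne h with h | h <;> simp [h, h.not_gt]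

lemma crossingSign_insert {O : Finset ι} {x : ι} (hx : x ∉ O) (j : ι) :
    crossingSign (insert x O) j = pairSign x j * crossingSign O j :=
  Finset.prod_insert hx

lemma inversionSign_insert (σ : Perm ι) {O : Finset ι} {x : ι} (hx : x ∉ O) :
    inversionSign σ (insert x O) =
      inversionSign σ O * (crossingSign O x * crossingSign (O.map σ.toEmbedding) (σ x)) := by
  have h_pair : ∀ i ∈ O, (if x < i ∧ σ i < σ x then -1 else 1) *
      (if i < x ∧ σ x < σ i then -1 else 1) = pairSign i x * pairSign (σ i) (σ x) := by
    intro i hi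
    have hne : i ≠ x := fun h => hx (h ▸ hi)
    unfold pairSign
    rcases lt_or_gt_of_ne hne with h | h <;>
      rcases lt_or_gt_of_ne (σ.injective.ne hne) with h' | h' <;>
      simp [h, h', h.not_gt, h'.not_gt]
  simp only [inversionSign, crossingSign, Finset.prod_insert hx, Finset.prod_map, lt_irrefl,
    false_and, if_false, one_mul, Finset.prod_mul_distrib, coe_toEmbedding]
  rw [← Finset.prod_mul_distrib (f := fun i => pairSign i x), ← Finset.prod_congr rfl h_pair,
    Finset.prod_mul_distrib]
  ac_rfl

lemma inversionSign_mul (σ τ : Perm ι) (O : Finset ι) :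
    inversionSign (σ * τ) O = inversionSign σ (O.map τ.toEmbedding) * inversionSign τ O := by
  induction O using Finset.induction_on with
  | empty => rfl
  | insert x O hx ih =>
    have hx' : τ x ∉ O.map τ.toEmbedding := by simpa using hx
    have h_map : (O.map τ.toEmbedding).map σ.toEmbedding = O.map (σ * τ).toEmbedding :=
      Finset.map_map _ _ _
    rw [Finset.map_insert, coe_toEmbedding, inversionSign_insert _ hx, inversionSign_insert _ hx,
      inversionSign_insert _ hx', ih, h_map, Perm.mul_apply]
    have h_sq := Int.units_mul_self (crossingSign (O.map τ.toEmbedding) (τ x))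
    generalize crossingSign (O.map τ.toEmbedding) (τ x) = a at h_sq ⊢
    rw [← mul_one (_ * _), ← h_sq]
    ac_rfl

lemma crossingSign_symmDiff_singleton (O : Finset ι) (j l : ι) :
    crossingSign (symmDiff O {j}) l = pairSign j l * crossingSign O l := by
  obtain ⟨U, hj, ⟨hO, hO'⟩ | ⟨hO, hO'⟩⟩ := symmDiff_singleton_cases O j <;> rw [hO', hO]
  · exact crossingSign_insert hj l
  · rw [crossingSign_insert hj, ← mul_assoc, Int.units_mul_self, one_mul]

lemma inversionSign_symmDiff_singleton (σ : Perm ι) (O : Finset ι) (j : ι) :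
    inversionSign σ (symmDiff O {j}) =
      inversionSign σ O * (crossingSign O j * crossingSign (O.map σ.toEmbedding) (σ j)) := by
  obtain ⟨U, hj, ⟨hO, hO'⟩ | ⟨hO, hO'⟩⟩ := symmDiff_singleton_cases O j <;> rw [hO', hO]
  · exact inversionSign_insert σ hj
  · have hj' : σ j ∉ U.map σ.toEmbedding := by simpa using hj
    rw [inversionSign_insert σ hj, Finset.map_insert, coe_toEmbedding, crossingSign_insert hj,
      crossingSign_insert hj', pairSign_self, pairSign_self, one_mul, one_mul, mul_assoc,
      Int.units_mul_self, mul_one]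

lemma inversionSign_eq_sign_subtypePerm [Fintype ι] (P : ι → Prop) [DecidablePred P]
    (σ : Perm ι) (h : ∀ x, P (σ x) ↔ P x) :
    inversionSign σ {x | P x} = Perm.sign (σ.subtypePerm h) := by
  let e := Fintype.orderIsoFinOfCardEq {x // P x} rfl
  have h_lt (a b) : e.symm.toEquiv.permCongr (σ.subtypePerm h) a <
      e.symm.toEquiv.permCongr (σ.subtypePerm h) b ↔ σ (e a) < σ (e b) := by
    simp [permCongr_apply, ← Subtype.coe_lt_coe]
  have h_prod (f : ι → ℤˣ) : ∏ x with P x, f x = ∏ a, f (e a) :=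
    (Finset.prod_subtype _ (by simp) f).trans (e.toEquiv.prod_comp fun x => f x).symm
  rw [← Perm.sign_permCongr e.symm.toEquiv, Perm.sign_eq_prod_prod_Iio, inversionSign,
    Finset.prod_comm, h_prod]
  refine Finset.prod_congr rfl fun b _ => ?_
  rw [h_prod, ← Finset.filter_gt_eq_Iio, Finset.prod_filter]
  refine Finset.prod_congr rfl fun a _ => ?_
  have h_coe : (e a : ι) < e b ↔ a < b := Subtype.coe_lt_coe.trans e.lt_iff_lt
  simp only [h_coe, h_lt]
  by_cases hab : a < b
  · have hne : σ (e a) ≠ σ (e b) := σ.injective.ne (h_coe.2 hab).ne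
    rcases lt_or_gt_of_ne hne with h_gt | h_gt <;> simp [hab, h_gt, h_gt.not_gt]
  · simp only [hab, false_and, if_false]

end InversionSign

section SignedWords

open Equiv

attribute [local instance] arrowAction

lemma mem_stabilizer_iff_forall_apply_eq {ι B : Type*} {w : ι → B} {σ : Perm ι} :
    σ ∈ MulAction.stabilizer (Perm ι) w ↔ ∀ x, w (σ x) = w x := by
  rw [MulAction.mem_stabilizer_iff, eq_comm, funext_iff]
  refine σ.forall_congr_right.symm.trans (forall_congr' fun x => ?_)
  rw [show (σ • w) (σ x) = w x from congrArg w (σ.symm_apply_apply x)]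

section Positions

variable {ι B : Type*} [Fintype ι] [DecidableEq B]

/-- The positions of the letter `b` in the word `w`. -/
def positions (w : ι → B) (b : B) : Finset ι := {x | w x = b}

lemma mem_positions {w : ι → B} {b : B} {x : ι} : x ∈ positions w b ↔ w x = b :=
  Finset.mem_filter_univ x

lemma positions_smul (σ : Perm ι) (w : ι → B) (b : B) :
    positions (σ • w) b = (positions w b).map σ.toEmbedding := by
  ext x
  rw [Finset.mem_map_equiv, mem_positions, mem_positions]
  rfl

lemma mem_orbit_of_card_positions_eq {v w : ι → B}
    (h : ∀ b, (positions w b).card = (positions v b).card) : w ∈ MulAction.orbit (Perm ι) v := by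
  have e (b : B) : {x // v x = b} ≃ {x // w x = b} := Fintype.equivOfCardEq <| by
    rw [Fintype.card_subtype, Fintype.card_subtype]
    exact (h b).symm
  refine ⟨ofFiberEquiv e, funext fun x => ?_⟩
  obtain ⟨y, rfl⟩ := (ofFiberEquiv e).surjective x
  exact (congrArg v ((ofFiberEquiv e).symm_apply_apply y)).trans (ofFiberEquiv_map e y).symm

end Positions

section Toggle

variable {ι A : Type*} [DecidableEq ι] [DecidableEq A]

/-- Exchange the letters `none` and `some s` at position `j` of the word `w`. -/
def toggle (s : A) (j : ι) (w : ι → Option A) : ι → Option A :=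
  Function.update w j (swap none (some s) (w j))

variable {s : A} {w : ι → Option A} {j : ι}

lemma toggle_toggle_self : toggle s j (toggle s j w) = w := by
  simp [toggle]

lemma toggle_comm {l : ι} : toggle s j (toggle s l w) = toggle s l (toggle s j w) := by
  rcases eq_or_ne j l with rfl | h
  · rfl
  · simp [toggle, h, h.symm, Function.update_comm h]

lemma smul_toggle (σ : Perm ι) : σ • toggle s j w = toggle s (σ j) (σ • w) := by
  funext x
  obtain ⟨y, rfl⟩ := σ.surjective x
  have h_smul (v : ι → Option A) (i : ι) : (σ • v) (σ i) = v i :=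
    congrArg v (σ.symm_apply_apply i)
  by_cases h : y = j <;> simp [toggle, h_smul, h]

variable [Fintype ι]

/-- The positions of the letters `none` and `some s` in the word `w`. -/
def togglable (s : A) (w : ι → Option A) : Finset ι := positions w none ∪ positions w (some s)

lemma mem_togglable : j ∈ togglable s w ↔ w j = none ∨ w j = some s := by
  rw [togglable, Finset.mem_union, mem_positions, mem_positions]

lemma togglable_smul (σ : Perm ι) : togglable s (σ • w) = (togglable s w).map σ.toEmbedding := by
  rw [togglable, positions_smul, positions_smul, ← Finset.map_union, togglable]

lemma togglable_toggle : togglable s (toggle s j w) = togglable s w := by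
  ext x
  rw [mem_togglable, mem_togglable]
  by_cases h : x = j
  · subst h
    simp [toggle, swap_apply_eq_iff, or_comm]
  · simp [toggle, h]

lemma positions_toggle (hj : j ∈ togglable s w) {b : Option A} (hb : b = none ∨ b = some s) :
    positions (toggle s j w) b = symmDiff (positions w b) {j} := by
  ext x
  simp only [mem_positions, Finset.mem_symmDiff, Finset.mem_singleton]
  by_cases h : x = j
  · subst h
    rcases mem_togglable.1 hj with hx | hx <;> rcases hb with rfl | rfl <;> simp [toggle, hx]
  · simp [toggle, h]

lemma positions_toggle_of_ne {a : A} (ha : a ≠ s) :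
    positions (toggle s j w) (some a) = positions w (some a) := by
  ext x
  rw [mem_positions, mem_positions]
  by_cases h : x = j
  · subst h
    rw [toggle, Function.update_self, swap_apply_eq_iff,
      swap_apply_of_ne_of_ne (Option.some_ne_none a) (Option.some_injective A |>.ne ha)]
  · rw [toggle, Function.update_of_ne h]

lemma card_togglable : (togglable s w).card =
    (positions w none).card + (positions w (some s)).card := by
  refine Finset.card_union_of_disjoint (Finset.disjoint_left.2 fun x hx hx' => ?_)
  exact Option.some_ne_none s ((mem_positions.1 hx').symm.trans (mem_positions.1 hx))

end Toggle

lemma sum_sum_eq_sum_diag_of_anticomm {ι M : Type*} [AddCommMonoid M] {F : ι → ι → M}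
    (hF : ∀ i j, i ≠ j → F i j + F j i = 0) (T : Finset ι) :
    ∑ i ∈ T, ∑ j ∈ T, F i j = ∑ i ∈ T, F i i := by
  classical
  induction T using Finset.induction_on with
  | empty => rfl
  | insert a T ha ih =>
    have h_off : ∑ j ∈ T, F a j + ∑ i ∈ T, F i a = 0 := by
      rw [← Finset.sum_add_distrib]
      exact Finset.sum_eq_zero fun i hi => hF a i fun h => ha (h ▸ hi)
    simp only [Finset.sum_insert ha, Finset.sum_add_distrib, ih]
    rw [add_assoc, ← add_assoc (∑ j ∈ T, F a j), h_off, zero_add]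

section Koszul

open MonoidAlgebra

variable {ι A : Type*} [Fintype ι] [LinearOrder ι] [DecidableEq A]

/-- Permutations act on words in the alphabet `Option A`, in which the letter `none` is odd and the
others are even, by permuting the positions, up to the sign of the permutation of odd letters. -/
def wordCocycle : SignCocycle (Perm ι) (ι → Option A) where
  toFun σ w := inversionSign σ (positions w none)
  map_mul' σ τ w := by rw [positions_smul, inversionSign_mul]

lemma wordCocycle_apply (σ : Perm ι) (w : ι → Option A) :
    wordCocycle σ w = inversionSign σ (positions w none) := rfl

variable (k : Type*) [CommRing k] {s : A}

/-- The value of the Koszul operator on the basis vector `w`: the sum of the words obtained by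
toggling a letter of `w` between `none` and `some s`, with the sign of the odd letters to its
left. -/
def koszulSum (s : A) (w : ι → Option A) : (wordCocycle (ι := ι) (A := A)).TwistedModule k :=
  ∑ j ∈ togglable s w, crossingSign (positions w none) j • wordCocycle.basisVec k (toggle s j w)

lemma single_smul_koszulSum (σ : Perm ι) (w : ι → Option A) :
    single σ (1 : k) • koszulSum k s w = wordCocycle σ w • koszulSum k s (σ • w) := by
  have h_sign {j : ι} (hj : j ∈ togglable s w) :
      crossingSign (positions w none) j * wordCocycle σ (toggle s j w) =
        wordCocycle σ w * crossingSign (positions (σ • w) none) (σ j) := by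
    rw [wordCocycle_apply, wordCocycle_apply, positions_toggle hj (.inl rfl),
      inversionSign_symmDiff_singleton, positions_smul,
      mul_left_comm, ← mul_assoc (crossingSign _ j), Int.units_mul_self, one_mul]
  rw [koszulSum, koszulSum, togglable_smul, Finset.sum_map, Finset.smul_sum, Finset.smul_sum]
  refine Finset.sum_congr rfl fun j hj => ?_
  rw [smul_comm, SignCocycle.single_smul_basisVec, one_smul, smul_smul, h_sign hj, smul_toggle,
    smul_smul, coe_toEmbedding]

/-- The Koszul operator of the even letter `s`, an equivariant map which exchanges words with an
even number and words with an odd number of odd letters. -/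
def koszul (s : A) : (wordCocycle (ι := ι) (A := A)).TwistedModule k →ₗ[k[Perm ι]]
    (wordCocycle (ι := ι) (A := A)).TwistedModule k :=
  SignCocycle.lift (koszulSum k s) (single_smul_koszulSum k)

lemma koszul_basisVec (w : ι → Option A) :
    koszul k s (wordCocycle.basisVec k w) = koszulSum k s w :=
  SignCocycle.lift_basisVec _ w

lemma koszul_koszul_basisVec (w : ι → Option A) :
    koszul k s (koszul k s (wordCocycle.basisVec k w)) =
      (togglable s w).card • wordCocycle.basisVec k w := by
  let F (j l : ι) : (wordCocycle (ι := ι) (A := A)).TwistedModule k :=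
    (crossingSign (positions w none) j * crossingSign (positions w none) l * pairSign j l) •
      wordCocycle.basisVec k (toggle s l (toggle s j w))
  have h_anticomm (j l : ι) (h : j ≠ l) : F j l + F l j = 0 := by
    simp only [F]
    rw [toggle_comm, pairSign_anticomm h, mul_comm (crossingSign _ l), mul_neg, Units.neg_smul,
      neg_add_cancel]
  have h_diag (j : ι) : F j j = wordCocycle.basisVec k w := by
    simp only [F]
    rw [Int.units_mul_self, pairSign_self, mul_one, one_smul, toggle_toggle_self]
  have h_toggle : ∀ j ∈ togglable s w, crossingSign (positions w none) j •
      koszul k s (wordCocycle.basisVec k (toggle s j w)) = ∑ l ∈ togglable s w, F j l := by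
    intro j hj
    rw [koszul_basisVec, koszulSum, togglable_toggle, Finset.smul_sum]
    refine Finset.sum_congr rfl fun l _ => ?_
    rw [positions_toggle hj (.inl rfl), crossingSign_symmDiff_singleton, smul_smul,
      mul_comm (pairSign j l), ← mul_assoc]
  rw [koszul_basisVec, koszulSum, map_sum]
  simp only [LinearMap.map_smul_of_tower]
  rw [Finset.sum_congr rfl h_toggle, sum_sum_eq_sum_diag_of_anticomm h_anticomm]
  simp only [h_diag, Finset.sum_const]

lemma nonempty_equiv_of_apply_apply_eq_smul {R M : Type*} [Ring R] [AddCommGroup M] [Module R M]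
    {D : M →ₗ[R] M} {P Q : Submodule R M} {a : R} (ha : IsUnit a) (hPQ : ∀ x ∈ P, D x ∈ Q)
    (hQP : ∀ x ∈ Q, D x ∈ P) (hP : ∀ x ∈ P, D (D x) = a • x) (hQ : ∀ x ∈ Q, D (D x) = a • x) :
    Nonempty (P ≃ₗ[R] Q) := by
  obtain ⟨u, rfl⟩ := ha
  refine ⟨LinearEquiv.ofBijective (D.restrict hPQ) ⟨?_, fun y => ?_⟩⟩
  · rw [injective_iff_map_eq_zero]
    intro x hx
    have hDx : D x = 0 := congrArg Subtype.val hx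
    have h_zero := hP x x.2
    rw [hDx, map_zero, ← Units.smul_def] at h_zero
    exact Subtype.ext ((smul_eq_zero_iff_eq u).1 h_zero.symm)
  · refine ⟨⟨(↑u⁻¹ : R) • D y, P.smul_mem _ (hQP y y.2)⟩, Subtype.ext ?_⟩
    change D ((↑u⁻¹ : R) • D y) = y
    rw [map_smul, hQ y y.2, smul_smul, Units.inv_mul, one_smul]

lemma koszul_mem_span {S T : Set (ι → Option A)}
    (h : ∀ w ∈ S, ∀ j ∈ togglable s w, toggle s j w ∈ T)
    {x : (wordCocycle (ι := ι) (A := A)).TwistedModule k} (hx : x ∈ wordCocycle.span k S) :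
    koszul k s x ∈ wordCocycle.span k T := by
  suffices wordCocycle.span k S ≤ (wordCocycle.span k T).comap (koszul k s) from this hx
  refine (wordCocycle.span_le_iff k).2 fun w hw => ?_
  rw [Submodule.mem_comap, koszul_basisVec]
  refine Submodule.sum_mem _ fun j hj => ?_
  rw [Units.smul_def]
  exact zsmul_mem (wordCocycle.basisVec_mem_span k (h w hw j hj)) _

lemma koszul_koszul_of_mem_span {m : ℕ} {S : Set (ι → Option A)}
    (h : ∀ w ∈ S, (togglable s w).card = m)
    {x : (wordCocycle (ι := ι) (A := A)).TwistedModule k} (hx : x ∈ wordCocycle.span k S) :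
    koszul k s (koszul k s x) = (m : k[Perm ι]) • x := by
  induction hx using Submodule.span_induction with
  | mem x hx =>
    obtain ⟨w, hw, rfl⟩ := hx
    rw [koszul_koszul_basisVec, h w hw, Nat.cast_smul_eq_nsmul]
  | zero => simp only [map_zero, smul_zero]
  | add x y _ _ hx hy => rw [map_add, map_add, hx, hy, smul_add]
  | smul a x _ hx =>
    rw [map_smul, map_smul, hx, Nat.cast_smul_eq_nsmul, Nat.cast_smul_eq_nsmul, smul_comm]

end Koszul

section Content

open MonoidAlgebra

variable {ι A : Type*} [Fintype ι] [DecidableEq A]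

variable (ι) in
/-- The words with `c a` letters `some a` for every `a`, and `t` letters `none`. -/
def wordsOfContent (c : A → ℕ) (t : ℕ) : Set (ι → Option A) :=
  {w | (∀ a, (positions w (some a)).card = c a) ∧ (positions w none).card = t}

lemma wordsOfContent_subset_orbit {c : A → ℕ} {t : ℕ} {w : ι → Option A}
    (hw : w ∈ wordsOfContent ι c t) : wordsOfContent ι c t ⊆ MulAction.orbit (Perm ι) w := by
  intro v hv
  refine mem_orbit_of_card_positions_eq fun b => ?_
  cases b with
  | none => rw [hv.2, hw.2]
  | some a => rw [hv.1, hw.1]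

lemma smul_mem_wordsOfContent {c : A → ℕ} {t : ℕ} (σ : Perm ι) {w : ι → Option A}
    (hw : w ∈ wordsOfContent ι c t) : σ • w ∈ wordsOfContent ι c t := by
  simpa only [wordsOfContent, Set.mem_ofPred_eq, positions_smul, Finset.card_map] using hw

lemma disjoint_wordsOfContent_update {c : A → ℕ} {s : A} {i j : ℕ} (hij : i ≠ j) (t t' : ℕ) :
    Disjoint (wordsOfContent ι (Function.update c s i) t)
      (wordsOfContent ι (Function.update c s j) t') := by
  refine Set.disjoint_left.2 fun w hi hj => hij ?_
  rw [← Function.update_self s i c, ← hi.1, hj.1, Function.update_self]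

section Parity

variable [DecidableEq ι]

variable (ι) in
/-- The words in which the letters `some a` with `a ≠ s` have multiplicity `c a`, there are `m`
letters among `none` and `some s`, and the number of letters `some s` is even exactly when `e`
holds. The Koszul operator of `s` exchanges the two choices of `e`. -/
def wordsOfParity (c : A → ℕ) (s : A) (m : ℕ) (e : Prop) : Set (ι → Option A) :=
  {w | (∀ a ≠ s, (positions w (some a)).card = c a) ∧ (togglable s w).card = m ∧
    (Even (positions w (some s)).card ↔ e)}

variable {c : A → ℕ} {s : A} {m : ℕ} {e : Prop}

lemma toggle_mem_wordsOfParity {w : ι → Option A} (hw : w ∈ wordsOfParity ι c s m e) {j : ι}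
    (hj : j ∈ togglable s w) : toggle s j w ∈ wordsOfParity ι c s m (¬e) := by
  obtain ⟨h_content, h_card, h_even⟩ := hw
  refine ⟨fun a ha => ?_, ?_, ?_⟩
  · rw [positions_toggle_of_ne ha, h_content a ha]
  · rw [togglable_toggle, h_card]
  · rw [positions_toggle hj (.inr rfl), even_card_symmDiff_singleton, h_even]

lemma wordsOfParity_eq_iUnion {I : Finset ℕ} (hI : ∀ i, i ∈ I ↔ i ≤ m ∧ (Even i ↔ e)) :
    wordsOfParity ι c s m e = ⋃ i : I, wordsOfContent ι (Function.update c s i) (m - i) := by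
  ext w
  simp only [wordsOfParity, wordsOfContent, card_togglable, Set.mem_ofPred_eq, Set.mem_iUnion,
    Subtype.exists, exists_prop, hI]
  constructor
  · rintro ⟨h_content, h_card, h_even⟩
    refine ⟨_, ⟨by omega, h_even⟩, fun a => ?_, by omega⟩
    rcases eq_or_ne a s with rfl | ha
    · rw [Function.update_self]
    · rw [Function.update_of_ne ha, h_content a ha]
  · rintro ⟨i, ⟨hi, h_even⟩, h_content, h_none⟩
    have h_some : (positions w (some s)).card = i := by rw [h_content, Function.update_self]
    refine ⟨fun a ha => ?_, by omega, by rwa [h_some]⟩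
    rw [h_content, Function.update_of_ne ha]

end Parity

variable [LinearOrder ι] (k : Type*) [CommRing k]

variable (ι) in
/-- The isomorphism class of the module spanned by the words with a given content. -/
def contentClass (c : A → ℕ) (t : ℕ) : ModuleIsoClass k[Perm ι] :=
  ModuleIsoClass.mk k[Perm ι] ↥(wordCocycle.span k (wordsOfContent ι c t))

lemma mk_span_wordsOfParity {c : A → ℕ} {s : A} {m : ℕ} {e : Prop} {I : Finset ℕ}
    (hI : ∀ i, i ∈ I ↔ i ≤ m ∧ (Even i ↔ e)) :
    ModuleIsoClass.mk k[Perm ι] ↥(wordCocycle.span k (wordsOfParity ι c s m e)) =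
      ∑ i ∈ I, contentClass ι k (Function.update c s i) (m - i) := by
  rw [wordsOfParity_eq_iUnion hI, SignCocycle.mk_span_iUnion]
  · exact Finset.sum_coe_sort I fun i => contentClass ι k (Function.update c s i) (m - i)
  · exact fun _ σ _ => smul_mem_wordsOfContent σ
  · exact fun i j hij => disjoint_wordsOfContent_update (Subtype.coe_ne_coe.2 hij) _ _

theorem sum_contentClass_even_eq_sum_contentClass_odd (c : A → ℕ) (s : A) {m : ℕ}
    (hm : IsUnit (m : k)) :
    ∑ i ∈ Finset.range (m + 1) with Even i, contentClass ι k (Function.update c s i) (m - i) =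
      ∑ i ∈ Finset.range (m + 1) with ¬Even i,
        contentClass ι k (Function.update c s i) (m - i) := by
  rw [← mk_span_wordsOfParity k (e := True) (by simp),
    ← mk_span_wordsOfParity k (e := ¬True) (by simp),
    ModuleIsoClass.mk_eq_mk_iff]
  have hm' : IsUnit (m : k[Perm ι]) := by
    simpa only [map_natCast] using hm.map (algebraMap k k[Perm ι])
  refine nonempty_equiv_of_apply_apply_eq_smul (D := koszul k s) hm'
    (fun _ => koszul_mem_span k fun _ hw _ => toggle_mem_wordsOfParity hw)
    (fun _ => koszul_mem_span k fun _ hw _ hj => ?_)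
    (fun _ => koszul_koszul_of_mem_span k fun _ hw => hw.2.1)
    (fun _ => koszul_koszul_of_mem_span k fun _ hw => hw.2.1)
  simpa only [not_not] using toggle_mem_wordsOfParity hw hj

end Content

end SignedWords

section YoungModules

open Equiv MonoidAlgebra

attribute [local instance] arrowAction

lemma blockIdx_cons (a : ℕ) (γ : List ℕ) (x : ℕ) :
    blockIdx (a :: γ) x = if x < a then 0 else blockIdx γ (x - a) + 1 := by
  have h_shift : (List.range γ.length).countP (fun j => a + (γ.take (j + 1)).sum ≤ x) =
      if x < a then 0 else blockIdx γ (x - a) := by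
    split_ifs with h
    · exact List.countP_eq_zero.2 fun j _ => by simp only [decide_eq_true_eq]; omega
    · exact List.countP_congr fun j _ => by simp only [decide_eq_true_eq]; omega
  rw [blockIdx, List.length_cons, List.range_succ_eq_map, List.countP_cons, List.countP_map]
  refine (congrArg (· + _) h_shift).trans ?_
  by_cases h : x < a <;> simp [h]

lemma count_blockIdx_eq (γ : List ℕ) (a : ℕ) :
    Nat.count (fun x => blockIdx γ x = a) γ.sum = γ.getD a 0 := by
  induction γ generalizing a with
  | nil => simp
  | cons b γ ih =>
    have h_first : Nat.count (fun x => blockIdx (b :: γ) x = a) b = if a = 0 then b else 0 := by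
      have h_zero : ∀ x < b, (blockIdx (b :: γ) x = a ↔ a = 0) := fun x hx => by
        rw [blockIdx_cons, if_pos hx, eq_comm]
      split_ifs with ha
      · exact Nat.count_iff_forall.2 fun x hx => (h_zero x hx).2 ha
      · exact Nat.count_iff_forall_not.2 fun x hx => mt (h_zero x hx).1 ha
    have h_rest : Nat.count (fun x => blockIdx (b :: γ) (b + x) = a) γ.sum =
        Nat.count (fun x => blockIdx γ x + 1 = a) γ.sum := by
      simp [blockIdx_cons]
    rw [List.sum_cons, Nat.count_add, h_first, h_rest]
    cases a with
    | zero => simp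
    | succ a => simpa using ih a

lemma card_positions_blockIdx {n : ℕ} {γ : List ℕ} (hγ : γ.sum = n) (a : ℕ) :
    (positions (fun x : Fin n => blockIdx γ x) a).card = γ.getD a 0 := by
  rw [← count_blockIdx_eq, hγ, Nat.count_eq_card_filter_range, ← Nat.Iio_eq_range,
    ← Fin.map_valEmbedding_univ, Finset.filter_map, Finset.card_map]
  rfl

lemma positions_comp_of_injective {ι B C : Type*} [Fintype ι] [DecidableEq B] [DecidableEq C]
    {g : B → C} (hg : Function.Injective g) (w : ι → B) (b : B) :
    positions (g ∘ w) (g b) = positions w b := by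
  ext x
  rw [mem_positions, mem_positions, Function.comp_apply, hg.eq_iff]

lemma sum_onePart (t : ℕ) : (onePart t).sum = t := by
  unfold onePart
  split_ifs with h <;> simp [h]

lemma getD_append_onePart_length (α : List ℕ) (t : ℕ) :
    (α ++ onePart t).getD α.length 0 = t := by
  unfold onePart
  split_ifs with h <;> simp [h]

lemma getD_append_onePart_of_ne {α : List ℕ} {a : ℕ} (ha : a ≠ α.length) (t : ℕ) :
    (α ++ onePart t).getD a 0 = α.getD a 0 := by
  rcases ha.lt_or_gt with ha | ha
  · rw [List.getD_append _ _ _ _ ha]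
  · rw [List.getD_eq_default _ _ ha.le, List.getD_eq_default]
    unfold onePart
    split_ifs <;> simp <;> omega

/-- The letter labelling the `a`-th block of `(α | t)`, where `L` is the length of `α`: the last
block is odd, and the even blocks are labelled through `f`. -/
def blockLetter (f : Perm ℕ) (L a : ℕ) : Option ℕ := if a = L then none else some (f a)

lemma blockLetter_self (f : Perm ℕ) (L : ℕ) : blockLetter f L L = none := if_pos rfl

lemma blockLetter_of_ne (f : Perm ℕ) {L a : ℕ} (h : a ≠ L) : blockLetter f L a = some (f a) :=
  if_neg h

lemma some_ne_blockLetter (f : Perm ℕ) {L a : ℕ} : some (f L) ≠ blockLetter f L a := by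
  rcases eq_or_ne a L with rfl | h
  · rw [blockLetter_self]
    exact Option.some_ne_none _
  · rw [blockLetter_of_ne f h]
    exact fun h' => h (f.injective (Option.some_injective _ h')).symm

lemma blockLetter_injective (f : Perm ℕ) (L : ℕ) : Function.Injective (blockLetter f L) := by
  intro a b h
  unfold blockLetter at h
  split_ifs at h with ha hb hb
  · rw [ha, hb]
  · exact f.injective (Option.some_injective _ h)

/-- The word recording for each position its block in the composition `(α | t)`. -/
def blockWord (n : ℕ) (f : Perm ℕ) (α : List ℕ) (t : ℕ) : Fin n → Option ℕ :=
  blockLetter f α.length ∘ fun x => blockIdx (α ++ onePart t) x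

variable {n t : ℕ} {α : List ℕ}

lemma positions_blockWord_none (f : Perm ℕ) :
    positions (blockWord n f α t) none =
      positions (fun x : Fin n => blockIdx (α ++ onePart t) x) α.length := by
  rw [← blockLetter_self f, blockWord, positions_comp_of_injective (blockLetter_injective f _)]

lemma blockWord_mem_wordsOfContent (h : α.sum + t = n) (f : Perm ℕ) :
    blockWord n f α t ∈ wordsOfContent (Fin n) (fun a => α.getD (f.symm a) 0) t := by
  have h_sum : (α ++ onePart t).sum = n := by rw [List.sum_append, sum_onePart, h]
  refine ⟨fun b => ?_, ?_⟩
  · obtain ⟨a, rfl⟩ := f.surjective b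
    simp only [f.symm_apply_apply]
    rcases eq_or_ne a α.length with rfl | ha
    · rw [List.getD_eq_default _ _ le_rfl, Finset.card_eq_zero, Finset.eq_empty_iff_forall_notMem]
      intro x hx
      exact some_ne_blockLetter f (mem_positions.1 hx).symm
    · rw [← blockLetter_of_ne f ha, blockWord,
        positions_comp_of_injective (blockLetter_injective f _), card_positions_blockIdx h_sum,
        getD_append_onePart_of_ne ha]
  · rw [positions_blockWord_none, card_positions_blockIdx h_sum, getD_append_onePart_length]

lemma youngSubgroup_eq_stabilizer (f : Perm ℕ) :
    youngSubgroup n (α ++ onePart t) = MulAction.stabilizer (Perm (Fin n)) (blockWord n f α t) := by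
  ext σ
  rw [mem_stabilizer_iff_forall_apply_eq]
  exact forall_congr' fun x => (blockLetter_injective f _).eq_iff.symm

variable (k : Type*) [Field k]

lemma chiHom_onePart_eq (h : α.sum + t = n) (f : Perm ℕ) (σ : youngSubgroup n (α ++ onePart t)) :
    chiHom k n α (onePart t) σ =
      ((wordCocycle (σ : Perm (Fin n)) (blockWord n f α t) : ℤ) : k) := by
  rw [wordCocycle_apply, positions_blockWord_none]
  rcases eq_or_ne t 0 with rfl | ht
  · have h_empty : positions (fun x : Fin n => blockIdx (α ++ onePart 0) x) α.length = ∅ := by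
      rw [← Finset.card_eq_zero, card_positions_blockIdx (by simpa [onePart] using h),
        getD_append_onePart_length]
    have h_length : (onePart 0).length = 0 := rfl
    rw [h_empty, chiHom, h_length, add_zero, Finset.Ico_self, Finset.prod_empty]
    simp [inversionSign]
  · have h_chi : chiHom k n α (onePart t) = blockSign k n (α ++ onePart t) α.length := by
      have h_length : (onePart t).length = 1 := by rw [onePart, if_neg ht, List.length_singleton]
      rw [chiHom, h_length, Nat.Ico_succ_singleton, Finset.prod_singleton]
    rw [h_chi, positions, inversionSign_eq_sign_subtypePerm _ _ fun x => by
      rw [youngSubgroup_mem σ x]]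
    rfl

lemma mk_SYPM_onePart_eq_contentClass (h : α.sum + t = n) (f : Perm ℕ) :
    ModuleIsoClass.mk (GA k n) (SYPM k n α (onePart t)) =
      contentClass (Fin n) k (fun a => α.getD (f a) 0) t := by
  have h_mem : blockWord n f.symm α t ∈ wordsOfContent (Fin n) (fun a => α.getD (f a) 0) t :=
    blockWord_mem_wordsOfContent h f.symm
  rw [contentClass, ModuleIsoClass.mk_eq_mk_iff,
    wordCocycle.span_eq_span_singleton k h_mem (wordsOfContent_subset_orbit h_mem)]
  exact SignCocycle.nonempty_quotient_inducedRelations_equiv_span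
    (youngSubgroup_eq_stabilizer f.symm) (chiHom_onePart_eq k h f.symm)

lemma exists_perm_getD_eq {α α' : List ℕ} (h : α.Perm α') :
    ∃ f : Perm ℕ, ∀ a, α'.getD (f a) 0 = α.getD a 0 := by
  suffices ∃ f : ℕ → ℕ, f.Bijective ∧ ∀ a, α'.getD (f a) 0 = α.getD a 0 by
    obtain ⟨f, hf, h_getD⟩ := this
    exact ⟨.ofBijective f hf, h_getD⟩
  induction h with
  | nil => exact ⟨id, Function.bijective_id, fun _ => rfl⟩
  | cons x _ ih =>
    obtain ⟨f, ⟨h_inj, h_surj⟩, h_getD⟩ := ih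
    refine ⟨fun a => a.casesOn 0 fun b => f b + 1, ⟨?_, ?_⟩, ?_⟩
    · rintro (_ | a) (_ | b) hab <;> simp_all [h_inj.eq_iff]
    · rintro (_ | a)
      · exact ⟨0, rfl⟩
      · obtain ⟨b, rfl⟩ := h_surj a
        exact ⟨b + 1, rfl⟩
    · rintro (_ | a)
      · rfl
      · exact h_getD a
  | swap x y l =>
    refine ⟨swap 0 1, Equiv.bijective _, ?_⟩
    rintro (_ | _ | a)
    · rfl
    · rfl
    · rw [swap_apply_of_ne_of_ne (by simp) (by simp)]
      rfl
  | trans _ _ ih₁ ih₂ =>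
    obtain ⟨f, hf, h_getD⟩ := ih₁
    obtain ⟨g, hg, h_getD'⟩ := ih₂
    exact ⟨g ∘ f, hg.comp hf, fun a => (h_getD' (f a)).trans (h_getD a)⟩

/-- The isomorphism class of `M(α | (n - |α|))`. -/
def youngClass (n : ℕ) (α : List ℕ) : ModuleIsoClass (GA k n) :=
  ModuleIsoClass.mk (GA k n) (SYPM k n α (onePart (n - α.sum)))

lemma youngClass_eq_contentClass {α : List ℕ} (h : α.sum ≤ n) :
    youngClass k n α = contentClass (Fin n) k (fun a => α.getD a 0) (n - α.sum) :=
  mk_SYPM_onePart_eq_contentClass k (Nat.add_sub_cancel' h) 1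

lemma youngClass_perm {α α' : List ℕ} (hα : α.sum ≤ n) (h : α.Perm α') :
    youngClass k n α = youngClass k n α' := by
  obtain ⟨f, hf⟩ := exists_perm_getD_eq h
  rw [youngClass_eq_contentClass k hα, youngClass, ← h.sum_eq,
    mk_SYPM_onePart_eq_contentClass k (h.sum_eq ▸ Nat.add_sub_cancel' hα) f]
  simp only [hf]

lemma update_getD_length (α : List ℕ) (i : ℕ) :
    Function.update (fun a => α.getD a 0) α.length i = fun a => (α ++ [i]).getD a 0 := by
  funext a
  rcases lt_trichotomy a α.length with ha | rfl | ha
  · rw [Function.update_of_ne ha.ne, List.getD_append _ _ _ _ ha]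
  · rw [Function.update_self, List.getD_append_right _ _ _ _ le_rfl, Nat.sub_self]
    rfl
  · rw [Function.update_of_ne ha.ne', List.getD_eq_default _ _ ha.le, List.getD_eq_default]
    simpa using ha

theorem youngClass_add_sum_even_eq_sum_odd {α : List ℕ} {m : ℕ} (hα : α.sum + m = n)
    (hm : (m : k) ≠ 0) :
    youngClass k n α + ∑ i ∈ Finset.Icc 1 m with Even i, youngClass k n (α ++ [i]) =
      ∑ i ∈ Finset.Icc 1 m with ¬Even i, youngClass k n (α ++ [i]) := by
  have h_zero : contentClass (Fin n) k (Function.update (fun a => α.getD a 0) α.length 0) m =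
      youngClass k n α := by
    rw [youngClass_eq_contentClass k (by omega), ← hα, Nat.add_sub_cancel_left]
    congr 1
    exact Function.update_eq_self_iff.2 (List.getD_eq_default _ _ le_rfl).symm
  have h_pos : ∀ i ∈ Finset.Icc 1 m, youngClass k n (α ++ [i]) =
      contentClass (Fin n) k (Function.update (fun a => α.getD a 0) α.length i) (m - i) := by
    intro i hi
    have h_sum : (α ++ [i]).sum = α.sum + i := by simp
    rw [Finset.mem_Icc] at hi
    rw [youngClass_eq_contentClass k (by omega), update_getD_length, h_sum]
    congr 1
    omega
  have h_range : Finset.range (m + 1) = insert 0 (Finset.Icc 1 m) := by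
    ext i
    simp only [Finset.mem_range, Finset.mem_insert, Finset.mem_Icc]
    omega
  have h_koszul := sum_contentClass_even_eq_sum_contentClass_odd (ι := Fin n) k
    (fun a => α.getD a 0) α.length (IsUnit.mk0 _ hm)
  rw [h_range, Finset.filter_insert, Finset.filter_insert, if_pos Even.zero,
    if_neg (not_not.2 Even.zero), Finset.sum_insert (by simp), Nat.sub_zero, h_zero] at h_koszul
  rw [Finset.sum_congr rfl fun i hi => h_pos i (Finset.mem_of_mem_filter i hi), h_koszul]
  exact Finset.sum_congr rfl fun i hi => (h_pos i (Finset.mem_of_mem_filter i hi)).symm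

end YoungModules

section TruncatedCompositions

/-- Every nonempty suffix of the list has sum not divisible by `p`; suffixes rather than prefixes,
because the recursion on compositions splits off the first part. -/
def SuffixSumsNotDvd (p : ℕ) : List ℕ → Prop
  | [] => True
  | i :: δ => ¬p ∣ (i :: δ).sum ∧ SuffixSumsNotDvd p δ

/-- The compositions obtained by splitting positive parts off `m` until the remainder is divisible
by `p`. -/
def truncatedCompositions (p m : ℕ) : Finset (List ℕ) :=
  if p ∣ m then {[]}
  else (Finset.Icc 1 m).attach.biUnion fun i => (truncatedCompositions p (m - i)).image (i.1 :: ·)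
termination_by m
decreasing_by
  have := Finset.mem_Icc.1 i.2
  omega

variable {p m : ℕ}

lemma truncatedCompositions_of_dvd (h : p ∣ m) : truncatedCompositions p m = {[]} := by
  rw [truncatedCompositions, if_pos h]

lemma truncatedCompositions_of_not_dvd (h : ¬p ∣ m) :
    truncatedCompositions p m =
      (Finset.Icc 1 m).biUnion fun i => (truncatedCompositions p (m - i)).image (i :: ·) := by
  rw [truncatedCompositions, if_neg h]
  ext δ
  simp

lemma nil_mem_truncatedCompositions : [] ∈ truncatedCompositions p m ↔ p ∣ m := by
  by_cases h : p ∣ m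
  · simp [truncatedCompositions_of_dvd h, h]
  · simp [truncatedCompositions_of_not_dvd h, h]

lemma cons_mem_truncatedCompositions {i : ℕ} {δ : List ℕ} :
    i :: δ ∈ truncatedCompositions p m ↔
      ¬p ∣ m ∧ i ∈ Finset.Icc 1 m ∧ δ ∈ truncatedCompositions p (m - i) := by
  by_cases h : p ∣ m
  · simp [truncatedCompositions_of_dvd h, h]
  · simp [truncatedCompositions_of_not_dvd h, h]

lemma mem_truncatedCompositions {δ : List ℕ} :
    δ ∈ truncatedCompositions p m ↔
      (∀ x ∈ δ, 0 < x) ∧ δ.sum ≤ m ∧ p ∣ m - δ.sum ∧ SuffixSumsNotDvd p δ := by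
  induction δ generalizing m with
  | nil => simp [nil_mem_truncatedCompositions, SuffixSumsNotDvd]
  | cons i δ ih =>
    simp only [cons_mem_truncatedCompositions, ih, Finset.mem_Icc, List.forall_mem_cons,
      SuffixSumsNotDvd, List.sum_cons, Nat.sub_sub]
    constructor
    · rintro ⟨h_dvd, ⟨hi, him⟩, h_pos, h_le, h_rem, h_suffix⟩
      have h_sum : i + δ.sum ≤ m := by omega
      exact ⟨⟨hi, h_pos⟩, h_sum, h_rem,
        fun h => h_dvd ((Nat.dvd_sub_iff_left h_sum h).1 h_rem), h_suffix⟩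
    · rintro ⟨⟨hi, h_pos⟩, h_sum, h_rem, h_dvd, h_suffix⟩
      exact ⟨fun h => h_dvd ((Nat.dvd_sub_iff_right h_sum h).1 h_rem), ⟨hi, by omega⟩,
        h_pos, by omega, h_rem, h_suffix⟩

lemma epsL_cons {i : ℕ} {δ : List ℕ} (hi : 0 < i) (hδ : ∀ x ∈ δ, 0 < x) :
    epsL (i :: δ) = if Even i then -epsL δ else epsL δ := by
  have h_length : δ.length ≤ δ.sum := List.length_le_sum_of_one_le δ hδ
  have h_exp : (i :: δ).sum - (i :: δ).length = (i - 1) + (δ.sum - δ.length) := by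
    rw [List.sum_cons, List.length_cons]
    omega
  rw [epsL, h_exp, pow_add]
  split_ifs with h_even
  · rw [(Nat.Even.sub_odd hi h_even odd_one).neg_one_pow, neg_one_mul, epsL]
  · rw [(Nat.Odd.sub_odd (Nat.not_even_iff_odd.1 h_even) odd_one).neg_one_pow, one_mul, epsL]

variable {M : Type*} [AddCommMonoid M] (v : List ℕ → M)

lemma sum_truncatedCompositions_cons (h : ¬p ∣ m) (s : ℤ) :
    ∑ δ ∈ truncatedCompositions p m with epsL δ = s, v δ =
      ∑ i ∈ Finset.Icc 1 m with Even i,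
          ∑ δ ∈ truncatedCompositions p (m - i) with epsL δ = -s, v (i :: δ) +
        ∑ i ∈ Finset.Icc 1 m with ¬Even i,
          ∑ δ ∈ truncatedCompositions p (m - i) with epsL δ = s, v (i :: δ) := by
  have h_disjoint : (Finset.Icc 1 m : Set ℕ).PairwiseDisjoint
      fun i => (truncatedCompositions p (m - i)).image (i :: ·) := by
    intro i _ j _ hij
    simp only [Function.onFun, Finset.disjoint_left, Finset.mem_image]
    rintro _ ⟨δ, _, rfl⟩ ⟨γ, _, h_eq⟩
    exact hij (List.head_eq_of_cons_eq h_eq).symm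
  rw [← Finset.sum_ite, Finset.sum_filter, truncatedCompositions_of_not_dvd h,
    Finset.sum_biUnion h_disjoint]
  refine Finset.sum_congr rfl fun i hi => ?_
  have h_epsL : ∀ δ ∈ truncatedCompositions p (m - i),
      epsL (i :: δ) = if Even i then -epsL δ else epsL δ := fun δ hδ =>
    epsL_cons (Finset.mem_Icc.1 hi).1 (mem_truncatedCompositions.1 hδ).1
  rw [Finset.sum_image fun _ _ _ _ h_eq => List.tail_eq_of_cons_eq h_eq]
  split_ifs with h_even <;> rw [Finset.sum_filter] <;>
    exact Finset.sum_congr rfl fun δ hδ => by simp [h_epsL δ hδ, h_even, neg_eq_iff_eq_neg]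

theorem add_sum_truncatedCompositions_neg_eq_pos {n : ℕ}
    (hv : ∀ (α : List ℕ) (m : ℕ), α.sum + m = n → ¬p ∣ m →
      v α + ∑ i ∈ Finset.Icc 1 m with Even i, v (α ++ [i]) =
        ∑ i ∈ Finset.Icc 1 m with ¬Even i, v (α ++ [i]))
    (α : List ℕ) (h_sum : α.sum + m = n) :
    v α + ∑ δ ∈ truncatedCompositions p m with epsL δ = -1, v (α ++ δ) =
      ∑ δ ∈ truncatedCompositions p m with epsL δ = 1, v (α ++ δ) := by
  induction m using Nat.strong_induction_on generalizing α with
  | _ m ih =>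
  by_cases h : p ∣ m
  · simp [truncatedCompositions_of_dvd h, Finset.sum_filter, epsL]
  have h_split : ∀ i ∈ Finset.Icc 1 m,
      ∑ δ ∈ truncatedCompositions p (m - i) with epsL δ = 1, v (α ++ i :: δ) =
        v (α ++ [i]) +
          ∑ δ ∈ truncatedCompositions p (m - i) with epsL δ = -1, v (α ++ i :: δ) := by
    intro i hi
    rw [Finset.mem_Icc] at hi
    have h_sum' : (α ++ [i]).sum + (m - i) = n := by
      rw [List.sum_append, List.sum_singleton]
      omega
    simpa only [List.append_assoc, List.singleton_append] using
      (ih (m - i) (by omega) (α ++ [i]) h_sum').symm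
  rw [sum_truncatedCompositions_cons _ h, sum_truncatedCompositions_cons _ h, neg_neg,
    Finset.sum_congr rfl fun i hi => h_split i (Finset.mem_of_mem_filter i hi),
    Finset.sum_congr (s₁ := {i ∈ Finset.Icc 1 m | ¬Even i}) (g := fun i => v (α ++ [i]) + _) rfl
      fun i hi => h_split i (Finset.mem_of_mem_filter i hi),
    Finset.sum_add_distrib, Finset.sum_add_distrib, ← hv α m h_sum h]
  abel

end TruncatedCompositions

section SortingCompositions

variable {p n : ℕ}

lemma prefixSumsNotDvd_iff_suffixSumsNotDvd_reverse {δ : List ℕ} :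
    (∀ j < δ.length, ¬p ∣ (δ.take (j + 1)).sum) ↔ SuffixSumsNotDvd p δ.reverse := by
  induction δ using List.reverseRecOn with
  | nil => simp [SuffixSumsNotDvd]
  | append_singleton δ x ih =>
    have h_take : ∀ j < δ.length, (δ ++ [x]).take (j + 1) = δ.take (j + 1) := fun j hj =>
      List.take_append_of_le_length hj
    rw [List.reverse_append, List.reverse_singleton, List.singleton_append, SuffixSumsNotDvd, ← ih,
      List.length_append, List.length_singleton, Nat.forall_lt_succ_right, and_comm,
      List.take_of_length_le (by simp), List.sum_append, List.sum_singleton, List.sum_cons,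
      List.sum_reverse, add_comm]
    exact and_congr_right fun _ => forall₂_congr fun j hj => by rw [h_take j hj]

lemma epsL_perm {δ γ : List ℕ} (h : δ.Perm γ) : epsL δ = epsL γ := by
  rw [epsL, epsL, h.sum_eq, h.length_eq]

lemma insertionSort_eq_iff_perm {δ μ : List ℕ} (hμ : μ.Pairwise (· ≥ ·)) :
    δ.insertionSort (· ≥ ·) = μ ↔ δ.Perm μ := by
  have h_sort := List.perm_insertionSort (· ≥ ·) δ
  refine ⟨fun h => h ▸ h_sort.symm, fun h => ?_⟩
  exact (h_sort.trans h).eq_of_pairwise' (List.pairwise_insertionSort _ _) hμ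

lemma numCompM_eq_card {μ : List ℕ} (hμ : MemPnm n p μ) :
    numCompM p μ = {δ ∈ truncatedCompositions p n | δ.insertionSort (· ≥ ·) = μ}.card := by
  obtain ⟨⟨h_sorted, h_pos⟩, h_sum, h_dvd⟩ := hμ
  rw [numCompM, ← List.toFinset_card_of_nodup ((List.nodup_dedup _).filter _),
    ← Finset.card_image_of_injective _ List.reverse_injective]
  congr 1
  ext δ
  simp only [Finset.mem_image, List.mem_toFinset, List.mem_filter, List.mem_dedup,
    List.mem_permutations, decide_eq_true_eq, prefixSumsNotDvd_iff_suffixSumsNotDvd_reverse,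
    Finset.mem_filter, mem_truncatedCompositions, insertionSort_eq_iff_perm h_sorted]
  constructor
  · rintro ⟨γ, ⟨h_perm, h_suffix⟩, rfl⟩
    have h_perm' := (List.reverse_perm γ).trans h_perm
    exact ⟨⟨fun x hx => h_pos x (h_perm'.mem_iff.1 hx), by rwa [h_perm'.sum_eq],
      by rwa [h_perm'.sum_eq], h_suffix⟩, h_perm'⟩
  · rintro ⟨⟨-, -, -, h_suffix⟩, h_perm⟩
    exact ⟨δ.reverse, ⟨(List.reverse_perm δ).trans h_perm, by rwa [List.reverse_reverse]⟩,
      List.reverse_reverse δ⟩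

lemma memPnm_insertionSort {δ : List ℕ} (hδ : δ ∈ truncatedCompositions p n) :
    MemPnm n p (δ.insertionSort (· ≥ ·)) := by
  have h_sort := List.perm_insertionSort (· ≥ ·) δ
  obtain ⟨h_pos, h_sum, h_dvd, -⟩ := mem_truncatedCompositions.1 hδ
  rw [← h_sort.sum_eq] at h_sum h_dvd
  exact ⟨⟨List.pairwise_insertionSort _ _, fun x hx => h_pos x (h_sort.mem_iff.1 hx)⟩,
    h_sum, h_dvd⟩

open Classical in
/-- The multiplicity `c_μ^(p)` when `μ ∈ P(n;p)` and `ε_μ = s`, else `0`: the common form of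
`multNeg` and `multPos`. -/
def signedMult (s : ℤ) (p n : ℕ) (μ : List ℕ) : ℕ :=
  if MemPnm n p μ ∧ epsL μ = s then numCompM p μ else 0

lemma card_insertionSort_fiber (s : ℤ) (p n : ℕ) (μ : List ℕ) :
    {δ ∈ {δ ∈ truncatedCompositions p n | epsL δ = s} | δ.insertionSort (· ≥ ·) = μ}.card =
      signedMult s p n μ := by
  have h_epsL : ∀ δ : List ℕ, δ.insertionSort (· ≥ ·) = μ → epsL δ = epsL μ := fun δ h =>
    epsL_perm (h ▸ (List.perm_insertionSort (· ≥ ·) δ).symm)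
  rw [signedMult, Finset.filter_filter]
  split_ifs with h
  · rw [numCompM_eq_card h.1]
    congr 1
    exact Finset.filter_congr fun δ _ => and_iff_right_of_imp fun hδ => (h_epsL δ hδ).trans h.2
  · refine Finset.card_eq_zero.2 (Finset.filter_eq_empty_iff.2 ?_)
    rintro δ hδ ⟨h_sign, h_sort⟩
    exact h ⟨h_sort ▸ memPnm_insertionSort hδ, (h_epsL δ h_sort) ▸ h_sign⟩

lemma exists_equiv_sigma_fin_fiber {α β : Type*} [DecidableEq β] (S : Finset α) (f : α → β)
    {c : β → ℕ} (hc : ∀ b, {a ∈ S | f a = b}.card = c b) :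
    ∃ e : S ≃ Σ b, Fin (c b), ∀ a, (e a).1 = f a := by
  have h_card (b : β) : Fintype.card {a : S // f a = b} = c b := by
    rw [← hc, Fintype.card_subtype, Finset.univ_eq_attach, ← Finset.card_map (.subtype _)]
    congr 1
    ext a
    simp [and_comm]
  exact ⟨(Equiv.sigmaFiberEquiv fun a : S => f a).symm.trans
    (Equiv.sigmaCongrRight fun b => Fintype.equivFinOfCardEq (h_card b)), fun _ => rfl⟩

lemma mk_directSum_signedMult (k : Type*) [Field k] (s : ℤ) (p n : ℕ) :
    ModuleIsoClass.mk (GA k n)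
        (⨁ t : Σ μ : List ℕ, Fin (signedMult s p n μ), SYPM k n t.1 (onePart (n - t.1.sum))) =
      ∑ δ ∈ truncatedCompositions p n with epsL δ = s, youngClass k n δ := by
  obtain ⟨e, he⟩ := exists_equiv_sigma_fin_fiber {δ ∈ truncatedCompositions p n | epsL δ = s}
    (fun δ => δ.insertionSort (· ≥ ·)) (card_insertionSort_fiber s p n)
  let _ : Fintype (Σ μ : List ℕ, Fin (signedMult s p n μ)) := Fintype.ofEquiv _ e
  calc _ = ∑ t : Σ μ : List ℕ, Fin (signedMult s p n μ), youngClass k n t.1 :=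
        ModuleIsoClass.mk_directSum _
    _ = ∑ δ : {δ ∈ truncatedCompositions p n | epsL δ = s}, youngClass k n δ := by
      rw [← e.sum_comp]
      refine Finset.sum_congr rfl fun δ _ => ?_
      have h_le := (mem_truncatedCompositions.1 (Finset.mem_of_mem_filter _ δ.2)).2.1
      rw [he, youngClass_perm k h_le (List.perm_insertionSort (· ≥ ·) δ.1).symm]
    _ = _ := Finset.sum_coe_sort _ _

end SortingCompositions

theorem stmt13_general (k : Type*) [Field k] (p : ℕ) [CharP k p] (n : ℕ) :
    Nonempty (
      (SYPM k n [] (onePart n) ×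
        ⨁ t : Σ μ : List ℕ, Fin (multNeg p n μ), SYPM k n t.1 (onePart (n - t.1.sum)))
      ≃ₗ[GA k n]
      ⨁ t : Σ μ : List ℕ, Fin (multPos p n μ), SYPM k n t.1 (onePart (n - t.1.sum))) := by
  have h_class : youngClass k n [] +
      ∑ δ ∈ truncatedCompositions p n with epsL δ = -1, youngClass k n δ =
        ∑ δ ∈ truncatedCompositions p n with epsL δ = 1, youngClass k n δ :=
    add_sum_truncatedCompositions_neg_eq_pos (youngClass k n) (fun α m hα hm =>
      youngClass_add_sum_even_eq_sum_odd k hα (mt (CharP.cast_eq_zero_iff k p m).1 hm))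
      [] (Nat.zero_add n)
  rw [← mk_directSum_signedMult, ← mk_directSum_signedMult, youngClass,
    ← ModuleIsoClass.mk_prod] at h_class
  exact ModuleIsoClass.mk_eq_mk_iff.1 h_class

theorem stmt13 (k : Type*) [Field k] (p : ℕ) (hp : p.Prime) (hodd : Odd p) [CharP k p]
    (n : ℕ) (hn : 1 ≤ n) :
    Nonempty (
      (SYPM k n [] [n] ×
        ⨁ t : Σ μ : List ℕ, Fin (multNeg p n μ), SYPM k n t.1 (onePart (n - t.1.sum)))
      ≃ₗ[GA k n]
      ⨁ t : Σ μ : List ℕ, Fin (multPos p n μ), SYPM k n t.1 (onePart (n - t.1.sum))) := by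
  have h_onePart : onePart n = [n] := if_neg (Nat.one_le_iff_ne_zero.1 hn)
  exact h_onePart ▸ stmt13_general k p n
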